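/- arXiv:2604.05036 — 7 statements merged into one kernel-verified Lean document; each statement's English description precedes it below -/
import Mathlib

section
/- Let N be a positive integer, let ρ be an N×N positive semidefinite complex Hermitian matrix, let σ be an N×N Hermitian matrix, and set Δ = σ − ρ. Then the number of strictly positive eigenvalues of Δ, counted with multiplicity (equivalently, the rank of the positive part Δ₊ in the decomposition Δ = Δ₊ − Δ₋ with Δ₊, Δ₋ ⪰ 0 and Δ₊Δ₋ = 0), is at most the rank of σ. -/
/-!
Let `P` be the `N × k` matrix whose columns are the orthonormal eigenvectors of `Δ = σ - ρ` with
positive eigenvalue. Then `Pᴴ Δ P` is diagonal with positive entries, so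
`Pᴴ σ P = Pᴴ Δ P + Pᴴ ρ P` is positive definite, hence of full rank `k`. Multiplication does not
increase the rank, so `k ≤ rank σ`.
-/

open scoped BigOperators ComplexOrder

/-- For `ρ` positive semidefinite and `σ` Hermitian, with `Δ = σ − ρ`,
the number of strictly positive eigenvalues of `Δ` (counted with multiplicity, i.e. the
rank of the positive part `Δ₊`) is at most the rank of `σ`. -/
theorem card_pos_eigenvalues_le_rank
    (N : ℕ) (hN : 0 < N) (ρ σ : Matrix (Fin N) (Fin N) ℂ)
    (hρ : ρ.PosSemidef) (hσ : σ.IsHermitian)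
    (hΔ : (σ - ρ).IsHermitian) :
    Fintype.card {i : Fin N // 0 < hΔ.eigenvalues i} ≤ σ.rank := by
  let U : Matrix (Fin N) (Fin N) ℂ := hΔ.eigenvectorUnitary
  let P : Matrix (Fin N) {i : Fin N // 0 < hΔ.eigenvalues i} ℂ := U.submatrix id Subtype.val
  have hU : U.conjTranspose * (σ - ρ) * U =
      Matrix.diagonal (fun i => (hΔ.eigenvalues i : ℂ)) := by
    have h := hΔ.conjStarAlgAut_star_eigenvectorUnitary
    rw [Unitary.conjStarAlgAut_apply] at h
    simpa [U, Matrix.star_eq_conjTranspose, Function.comp_def] using h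
  have hP : P.conjTranspose * (σ - ρ) * P =
      Matrix.diagonal (fun i : {i : Fin N // 0 < hΔ.eigenvalues i} =>
        (hΔ.eigenvalues i : ℂ)) := by
    have h : P.conjTranspose * (σ - ρ) * P =
        (U.conjTranspose * (σ - ρ) * U).submatrix Subtype.val Subtype.val := rfl
    rw [h, hU, Matrix.submatrix_diagonal _ _ Subtype.val_injective]
    rfl
  have hpos : (P.conjTranspose * σ * P).PosDef := by
    have h : P.conjTranspose * σ * P =
        P.conjTranspose * (σ - ρ) * P + P.conjTranspose * ρ * P := by
      rw [← Matrix.add_mul, ← Matrix.mul_add, sub_add_cancel]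
    rw [h, hP]
    refine Matrix.PosDef.add_posSemidef (Matrix.PosDef.diagonal fun i => ?_)
      (hρ.conjTranspose_mul_mul_same P)
    exact_mod_cast i.2
  rw [← Matrix.rank_of_isUnit _ hpos.isUnit]
  exact (Matrix.rank_mul_le_left _ _).trans (Matrix.rank_mul_le_right _ _)
end

section
/- Let A and B be N×N Hermitian complex matrices with B positive semidefinite. Then for every index i, the i-th largest eigenvalue of A + B (eigenvalues sorted in nonincreasing order, counted with multiplicity) is at least the i-th largest eigenvalue of A. -/
open scoped BigOperators ComplexOrder

/-!
The argument is the dimension count behind the Courant–Fischer principle. For real `t`, the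
number of eigenvalues `≥ t` of `A` is at most that of `A + B` (`card_eigenvalues_ge_le`):
otherwise some nonzero `x` lies in the span of the eigenvectors of `A` with eigenvalue `≥ t` and
is orthogonal to the eigenvectors of `A + B` with eigenvalue `≥ t`. Diagonalizing both quadratic
forms (`quadForm_eq_sum`) gives `t ‖x‖² ≤ ⟪x, A x⟫ ≤ ⟪x, (A + B) x⟫ < t ‖x‖²`, a contradiction.

If `f i < g i`, take `t = g i`: at least `i + 1` of the values of `g` are `≥ t`, but at most `i`
of the values of `f` are, which contradicts the count.
-/

/-- The quadratic form of a Hermitian matrix, in coordinates with respect to its eigenbasis. -/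
lemma quadForm_eq_sum {N : ℕ} {A : Matrix (Fin N) (Fin N) ℂ} (hA : A.IsHermitian)
    (x : EuclideanSpace ℂ (Fin N)) :
    (inner ℂ x (Matrix.toEuclideanLin A x)).re =
      ∑ j, hA.eigenvalues j * ‖inner ℂ (hA.eigenvectorBasis j) x‖ ^ 2 := by
  have hb (j : Fin N) : Matrix.toEuclideanLin A (hA.eigenvectorBasis j) =
      (hA.eigenvalues j : ℂ) • hA.eigenvectorBasis j := by
    ext k
    have := congrFun (hA.mulVec_eigenvectorBasis j) k
    simpa [Matrix.toLpLin_apply] using this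
  rw [← hA.eigenvectorBasis.sum_inner_mul_inner, Complex.re_sum]
  refine Finset.sum_congr rfl fun j _ => ?_
  rw [← (Matrix.isSymmetric_toEuclideanLin_iff.mpr hA) (hA.eigenvectorBasis j) x, hb,
    inner_smul_left, Complex.conj_ofReal, mul_left_comm, ← inner_conj_symm x,
    ← Complex.normSq_eq_conj_mul_self, Complex.normSq_eq_norm_sq, ← Complex.ofReal_mul,
    Complex.ofReal_re]

lemma card_eigenvalues_ge_le {N : ℕ} {A B : Matrix (Fin N) (Fin N) ℂ}
    (hA : A.IsHermitian) (hB : B.PosSemidef) (hAB : (A + B).IsHermitian) (t : ℝ) :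
    (Finset.univ.filter fun j => t ≤ hA.eigenvalues j).card ≤
      (Finset.univ.filter fun j => t ≤ hAB.eigenvalues j).card := by
  by_contra! hlt
  let L₁ : EuclideanSpace ℂ (Fin N) →ₗ[ℂ] ({j // ¬ t ≤ hA.eigenvalues j} → ℂ) :=
    LinearMap.pi fun j => (innerSL ℂ (hA.eigenvectorBasis j)).toLinearMap
  let L₂ : EuclideanSpace ℂ (Fin N) →ₗ[ℂ] ({j // t ≤ hAB.eigenvalues j} → ℂ) :=
    LinearMap.pi fun j => (innerSL ℂ (hAB.eigenvectorBasis j)).toLinearMap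
  have hker : LinearMap.ker (L₁.prod L₂) ≠ ⊥ := by
    apply LinearMap.ker_ne_bot_of_finrank_lt
    have hc := Finset.card_filter_add_card_filter_not (s := (Finset.univ : Finset (Fin N)))
      (fun j => t ≤ hA.eigenvalues j)
    rw [Finset.card_univ, Fintype.card_fin] at hc
    rw [Module.finrank_prod, Module.finrank_fintype_fun_eq_card,
      Module.finrank_fintype_fun_eq_card, finrank_euclideanSpace_fin, Fintype.card_subtype,
      Fintype.card_subtype]
    omega
  obtain ⟨x, hx, hx0⟩ := Submodule.exists_mem_ne_zero_of_ne_bot hker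
  rw [LinearMap.ker_prod, Submodule.mem_inf, LinearMap.mem_ker, LinearMap.mem_ker] at hx
  have h₁ (j) (hj : ¬ t ≤ hA.eigenvalues j) : inner ℂ (hA.eigenvectorBasis j) x = 0 :=
    congrFun hx.1 ⟨j, hj⟩
  have h₂ (j) (hj : t ≤ hAB.eigenvalues j) : inner ℂ (hAB.eigenvectorBasis j) x = 0 :=
    congrFun hx.2 ⟨j, hj⟩
  have lower : t * ‖x‖ ^ 2 ≤ (inner ℂ x (Matrix.toEuclideanLin A x)).re := by
    rw [quadForm_eq_sum hA, ← hA.eigenvectorBasis.sum_sq_norm_inner_right x, Finset.mul_sum]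
    refine Finset.sum_le_sum fun j _ => ?_
    by_cases hj : t ≤ hA.eigenvalues j
    · gcongr
    · simp [h₁ j hj]
  have upper : (inner ℂ x (Matrix.toEuclideanLin (A + B) x)).re < t * ‖x‖ ^ 2 := by
    rw [quadForm_eq_sum hAB, ← hAB.eigenvectorBasis.sum_sq_norm_inner_right x, Finset.mul_sum]
    -- Strictness comes from a coordinate of `x` that does not vanish.
    obtain ⟨k, hk⟩ : ∃ k, inner ℂ (hAB.eigenvectorBasis k) x ≠ 0 := by
      by_contra! h
      have := hAB.eigenvectorBasis.sum_sq_norm_inner_right x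
      simp only [h, norm_zero] at this
      exact hx0 (by simpa using this.symm)
    refine Finset.sum_lt_sum (fun j _ => ?_) ⟨k, Finset.mem_univ k, ?_⟩
    · by_cases hj : t ≤ hAB.eigenvalues j
      · simp [h₂ j hj]
      · gcongr
        exact (not_le.mp hj).le
    · have hk' : hAB.eigenvalues k < t := not_le.mp fun h => hk (h₂ k h)
      gcongr
  have hBx : 0 ≤ (inner ℂ x (Matrix.toEuclideanLin B x)).re := by
    have h := (Complex.le_def.mp (hB.dotProduct_mulVec_nonneg x.ofLp)).1
    simpa [EuclideanSpace.inner_eq_star_dotProduct, Matrix.toLpLin_apply, dotProduct_comm] using h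
  rw [map_add, LinearMap.add_apply, inner_add_right, Complex.add_re] at upper
  linarith

lemma card_filter_eq_of_map_eq {N : ℕ} {f e : Fin N → ℝ}
    (h : Multiset.map f Finset.univ.val = Multiset.map e Finset.univ.val) (t : ℝ) :
    (Finset.univ.filter fun j => t ≤ f j).card = (Finset.univ.filter fun j => t ≤ e j).card := by
  have := congrArg (Multiset.countP (t ≤ ·)) h
  rwa [Multiset.countP_map, Multiset.countP_map] at this

/-- **Weyl monotonicity.** If `A`, `B` are Hermitian with `B ⪰ 0`, then for
every index `i` the `i`-th largest eigenvalue of `A + B` is at least the `i`-th largest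
eigenvalue of `A`.  The `i`-th largest eigenvalues are expressed via antitone enumerations
`f`, `g` of the eigenvalue multisets of `A + B` and `A` respectively. -/
theorem weyl_eigenvalue_monotone
    (N : ℕ) (hN : 0 < N) (A B : Matrix (Fin N) (Fin N) ℂ)
    (hA : A.IsHermitian) (hB : B.PosSemidef) (hAB : (A + B).IsHermitian)
    (f g : Fin N → ℝ) (hf : Antitone f) (hg : Antitone g)
    (hfeq : Multiset.map f Finset.univ.val = Multiset.map hAB.eigenvalues Finset.univ.val)
    (hgeq : Multiset.map g Finset.univ.val = Multiset.map hA.eigenvalues Finset.univ.val) :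
    ∀ i : Fin N, g i ≤ f i := by
  intro i
  by_contra! hlt
  have h := card_eigenvalues_ge_le hA hB hAB (g i)
  rw [← card_filter_eq_of_map_eq hfeq, ← card_filter_eq_of_map_eq hgeq] at h
  have hg' : (Finset.Iic i).card ≤ (Finset.univ.filter fun j => g i ≤ g j).card :=
    Finset.card_le_card fun j hj => by simpa using hg (Finset.mem_Iic.mp hj)
  have hf' : (Finset.univ.filter fun j => g i ≤ f j).card ≤ (Finset.Iio i).card :=
    Finset.card_le_card fun j hj => by
      rw [Finset.mem_filter] at hj
      rw [Finset.mem_Iio]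
      by_contra! hij
      linarith [hf hij, hj.2]
  rw [Fin.card_Iic] at hg'
  rw [Fin.card_Iio] at hf'
  omega
end

section
/- Let n ≥ 1, d ≥ 1 be integers, p ∈ [0,1], and let k be a natural number with k + 1 ≤ 2n and k + 1 ≥ n·(1−p)^d. For pairs of bitstrings a, b : Fin n → Bool define h(a,b) = |a| + |b| and m(a,b) = #{ j : a(j) = false and b(j) = false }. Then Σ over all pairs (a,b) with h(a,b) ≥ k+1 of [ 2^{−n} · (1−p)^{d·h(a,b)/2} · (2 − (1−p)^d)^{m(a,b)} ]² ≤ 4^{−n} · (2 − (1−p)^d)^{2n−k−1} · exp( 2n·H((k+1)/(2n)) ) · (1−p)^{d(k+1)}, where H(x) = −x·ln x − (1−x)·ln(1−x) is the binary entropy (with H(1) interpreted as 0). -/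
/-!
Write `q = (1 - p) ^ d`, `s = 2 - q`, `N = 2 n`, `t = k + 1` and `x = t / N`. Every common zero of
`a` and `b` uses up two of the `N - h(a, b)` zeros of the pair, so `s ≥ 1` bounds the squared
summand by `4⁻ⁿ q ^ h s ^ (N - h)`. What remains is a Chernoff bound for the upper tail of a
binomial with success probability `q / 2 ≤ x`: since `q (1 - x) ≤ s x`, each term with `h ≥ t`
satisfies `q ^ h s ^ (N - h) ≤ exp (N H(x)) q ^ t s ^ (N - t) * x ^ h (1 - x) ^ (N - h)`
(`chernoff_term`), because `exp (N H(x)) x ^ t (1 - x) ^ (N - t) = 1` (`exp_binEnt_mul`). The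
weights `x ^ h (1 - x) ^ (N - h)` sum to `1` over all pairs (`sum_pair_weights`).
-/

open scoped BigOperators

/-- Number of `true` entries of a bitstring. -/
def bitWeight {n : ℕ} (a : Fin n → Bool) : ℕ :=
  (Finset.univ.filter fun j => a j = true).card

/-- Hamming weight of the operator `|a⟩⟨b|`. -/
def hammWeight {n : ℕ} (a b : Fin n → Bool) : ℕ :=
  bitWeight a + bitWeight b

/-- Number of common-zero positions of the pair `(a, b)`. -/
def numCommonZeros {n : ℕ} (a b : Fin n → Bool) : ℕ :=
  (Finset.univ.filter fun j => a j = false ∧ b j = false).card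

/-- Binary entropy with natural logarithm (`Real.log 0 = 0`, so `H 1 = 0`). -/
noncomputable def binEnt (x : ℝ) : ℝ :=
  -x * Real.log x - (1 - x) * Real.log (1 - x)

lemma bitWeight_le {n : ℕ} (a : Fin n → Bool) : bitWeight a ≤ n := by
  simpa [bitWeight] using Finset.card_filter_le (Finset.univ : Finset (Fin n)) (a · = true)

lemma card_false_eq {n : ℕ} (a : Fin n → Bool) :
    (Finset.univ.filter fun j => a j = false).card = n - bitWeight a := by
  have h := Finset.card_filter_add_card_filter_not (s := (Finset.univ : Finset (Fin n)))
    (fun j => a j = true)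
  simp only [Bool.not_eq_true, Finset.card_univ, Fintype.card_fin] at h
  unfold bitWeight
  omega

lemma two_mul_numCommonZeros_le {n : ℕ} (a b : Fin n → Bool) :
    2 * numCommonZeros a b ≤ 2 * n - hammWeight a b := by
  have ha : numCommonZeros a b ≤ n - bitWeight a := by
    rw [← card_false_eq]
    exact Finset.card_le_card (Finset.monotone_filter_right _ fun _ _ h => h.1)
  have hb : numCommonZeros a b ≤ n - bitWeight b := by
    rw [← card_false_eq]
    exact Finset.card_le_card (Finset.monotone_filter_right _ fun _ _ h => h.2)
  have := bitWeight_le a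
  have := bitWeight_le b
  unfold hammWeight
  omega

lemma sum_weights (n : ℕ) (x y : ℝ) :
    ∑ a : Fin n → Bool, x ^ bitWeight a * y ^ (n - bitWeight a) = (x + y) ^ n := by
  have h := Finset.prod_univ_sum (fun _ : Fin n => (Finset.univ : Finset Bool))
    (fun _ c => if c = true then x else y)
  simp only [Fintype.piFinset_univ, Fintype.sum_bool, Finset.prod_const, Finset.card_univ,
    Fintype.card_fin, if_true, Bool.false_eq_true, if_false] at h
  rw [h]
  refine Finset.sum_congr rfl fun a _ => ?_
  rw [Finset.prod_ite, Finset.prod_const, Finset.prod_const]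
  simp only [Bool.not_eq_true, card_false_eq]
  rfl

/-- The Bernoulli product weights on pairs of bitstrings have total mass `1`. -/
lemma sum_pair_weights (n : ℕ) (x : ℝ) :
    ∑ ab : (Fin n → Bool) × (Fin n → Bool),
      x ^ hammWeight ab.1 ab.2 * (1 - x) ^ (2 * n - hammWeight ab.1 ab.2) = 1 := by
  have h := sum_weights n x (1 - x)
  rw [add_sub_cancel, one_pow] at h
  calc _ = ∑ ab : (Fin n → Bool) × (Fin n → Bool),
        (x ^ bitWeight ab.1 * (1 - x) ^ (n - bitWeight ab.1)) *
          (x ^ bitWeight ab.2 * (1 - x) ^ (n - bitWeight ab.2)) := by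
        refine Finset.sum_congr rfl fun ab _ => ?_
        have h1 := bitWeight_le ab.1
        have h2 := bitWeight_le ab.2
        have h3 : 2 * n - hammWeight ab.1 ab.2 = (n - bitWeight ab.1) + (n - bitWeight ab.2) := by
          unfold hammWeight
          omega
        rw [h3, hammWeight, pow_add, pow_add]
        ring
    _ = 1 := by
        rw [Fintype.sum_prod_type]
        dsimp only
        rw [← Fintype.sum_mul_sum, h, one_mul]

/-- The case `t = N` is included: then `x = 1` and the second power is `0 ^ 0 = 1`. -/
lemma exp_binEnt_mul (N t : ℕ) (ht : 0 < t) (htN : t ≤ N) (x : ℝ) (hx : x = (t : ℝ) / N) :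
    Real.exp (N * binEnt x) * (x ^ t * (1 - x) ^ (N - t)) = 1 := by
  have hN : (0 : ℝ) < N := by exact_mod_cast ht.trans_le htN
  have ht' : (0 : ℝ) < t := by exact_mod_cast ht
  have hx0 : 0 < x := by rw [hx]; positivity
  have hNx : (N : ℝ) * x = t := by rw [hx]; field_simp
  have h1 : x ^ t = Real.exp (t * Real.log x) := by
    rw [Real.exp_nat_mul, Real.exp_log hx0]
  have h2 : (1 - x) ^ (N - t) = Real.exp (((N - t : ℕ) : ℝ) * Real.log (1 - x)) := by
    rcases htN.eq_or_lt with rfl | hlt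
    · simp
    · have : (t : ℝ) < N := by exact_mod_cast hlt
      have hx1 : 0 < 1 - x := by
        rw [hx, sub_pos, div_lt_one hN]
        exact this
      rw [Real.exp_nat_mul, Real.exp_log hx1]
  rw [h1, h2, ← Real.exp_add, ← Real.exp_add, Real.exp_eq_one_iff, Nat.cast_sub htN, binEnt,
    ← hNx]
  ring

/-- The pointwise comparison behind the Chernoff bound; `E` plays the role of `exp (N H(x))`. -/
lemma chernoff_term (N t h : ℕ) (hth : t ≤ h) (hhN : h ≤ N) (q x E : ℝ)
    (hq0 : 0 ≤ q) (hq1 : q ≤ 1) (hx0 : 0 ≤ x) (hx1 : x ≤ 1) (hqx : q ≤ 2 * x) (hE0 : 0 ≤ E)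
    (hE : E * (x ^ t * (1 - x) ^ (N - t)) = 1) :
    q ^ h * (2 - q) ^ (N - h) ≤
      (2 - q) ^ (N - t) * E * q ^ t * (x ^ h * (1 - x) ^ (N - h)) := by
  obtain ⟨j, rfl⟩ := Nat.exists_eq_add_of_le hth
  obtain ⟨l, rfl⟩ := Nat.exists_eq_add_of_le hhN
  have e1 : t + j + l - (t + j) = l := by omega
  have e2 : t + j + l - t = j + l := by omega
  rw [e2] at hE
  rw [e1, e2]
  have hs : 0 ≤ 2 - q := by linarith
  have hx1' : 0 ≤ 1 - x := by linarith
  have key : (q * (1 - x)) ^ j ≤ ((2 - q) * x) ^ j :=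
    pow_le_pow_left₀ (by positivity) (by nlinarith) j
  calc q ^ (t + j) * (2 - q) ^ l
      = q ^ (t + j) * (2 - q) ^ l * (E * (x ^ t * (1 - x) ^ (j + l))) := by rw [hE, mul_one]
    _ = (q ^ t * (2 - q) ^ l * E * x ^ t * (1 - x) ^ l) * (q * (1 - x)) ^ j := by
        rw [mul_pow]; ring
    _ ≤ (q ^ t * (2 - q) ^ l * E * x ^ t * (1 - x) ^ l) * ((2 - q) * x) ^ j := by gcongr
    _ = _ := by rw [mul_pow]; ring

/-- The squared Hilbert–Schmidt truncation error bound for an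
amplitude-damped IQP circuit of depth `d`, noise strength `p`, and cutoff `k`. -/
theorem truncation_error_bound
    (n d : ℕ) (hn : 1 ≤ n) (hd : 1 ≤ d) (p : ℝ) (hp0 : 0 ≤ p) (hp1 : p ≤ 1)
    (k : ℕ) (hk : k + 1 ≤ 2 * n) (hk2 : (n : ℝ) * (1 - p) ^ d ≤ (k : ℝ) + 1) :
    ∑ ab ∈ Finset.univ.filter
        (fun ab : (Fin n → Bool) × (Fin n → Bool) => k + 1 ≤ hammWeight ab.1 ab.2),
      (((2 : ℝ) ^ n)⁻¹ * (1 - p) ^ (((d : ℝ) * (hammWeight ab.1 ab.2 : ℝ)) / 2) *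
          (2 - (1 - p) ^ d) ^ numCommonZeros ab.1 ab.2) ^ 2
      ≤ ((4 : ℝ) ^ n)⁻¹ * (2 - (1 - p) ^ d) ^ (2 * n - k - 1) *
          Real.exp (2 * (n : ℝ) * binEnt (((k : ℝ) + 1) / (2 * (n : ℝ)))) *
          (1 - p) ^ (d * (k + 1)) := by
  have hp : 0 ≤ 1 - p := by linarith
  set q : ℝ := (1 - p) ^ d with hq
  have hq0 : 0 ≤ q := pow_nonneg hp d
  have hq1 : q ≤ 1 := pow_le_one₀ hp (by linarith)
  have hn0 : (0 : ℝ) < n := by exact_mod_cast hn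
  set x : ℝ := ((k : ℝ) + 1) / (2 * (n : ℝ)) with hx
  have hx0 : 0 ≤ x := by positivity
  have hk' : (k : ℝ) + 1 ≤ 2 * n := by exact_mod_cast hk
  have hx1 : x ≤ 1 := (div_le_one (by positivity)).2 hk'
  have hqx : q ≤ 2 * x := by
    have : 2 * x = ((k : ℝ) + 1) / n := by rw [hx]; field_simp
    rw [this, le_div_iff₀ hn0]
    linarith
  have hE := exp_binEnt_mul (2 * n) (k + 1) k.succ_pos hk x (by rw [hx]; push_cast; rfl)
  push_cast at hE
  set E : ℝ := Real.exp (2 * (n : ℝ) * binEnt x)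
  have hE0 : 0 ≤ E := (Real.exp_pos _).le
  set C : ℝ := ((4 : ℝ) ^ n)⁻¹ * ((2 - q) ^ (2 * n - (k + 1)) * E * q ^ (k + 1)) with hC
  have hs : 1 ≤ 2 - q := by linarith
  have hC0 : 0 ≤ C := by positivity
  calc _ ≤ ∑ ab ∈ Finset.univ.filter
        (fun ab : (Fin n → Bool) × (Fin n → Bool) => k + 1 ≤ hammWeight ab.1 ab.2),
        C * (x ^ hammWeight ab.1 ab.2 * (1 - x) ^ (2 * n - hammWeight ab.1 ab.2)) := by
        refine Finset.sum_le_sum fun ab hab => ?_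
        have hth : k + 1 ≤ hammWeight ab.1 ab.2 := (Finset.mem_filter.1 hab).2
        have hm := two_mul_numCommonZeros_le ab.1 ab.2
        have hhN : hammWeight ab.1 ab.2 ≤ 2 * n := by
          have h1 := bitWeight_le ab.1
          have h2 := bitWeight_le ab.2
          unfold hammWeight
          omega
        generalize hammWeight ab.1 ab.2 = h at *
        generalize numCommonZeros ab.1 ab.2 = m at *
        have hr : ((1 - p) ^ (((d : ℝ) * (h : ℝ)) / 2)) ^ 2 = q ^ h := by
          rw [← Real.rpow_mul_natCast hp, hq, ← pow_mul, ← Real.rpow_natCast]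
          congr 1
          push_cast
          ring
        have h4 : (((2 : ℝ) ^ n)⁻¹) ^ 2 = ((4 : ℝ) ^ n)⁻¹ := by
          rw [inv_pow, ← pow_mul, mul_comm n 2, pow_mul]
          norm_num
        rw [mul_pow, mul_pow, hr, h4, ← pow_mul (2 - q), mul_comm m 2, hC, mul_assoc, mul_assoc]
        refine mul_le_mul_of_nonneg_left ?_ (by positivity)
        refine le_trans ?_ (chernoff_term (2 * n) (k + 1) h hth hhN q x E hq0 hq1 hx0 hx1 hqx hE0 hE)
        exact mul_le_mul_of_nonneg_left (pow_le_pow_right₀ hs hm) (by positivity)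
    _ ≤ ∑ ab : (Fin n → Bool) × (Fin n → Bool),
        C * (x ^ hammWeight ab.1 ab.2 * (1 - x) ^ (2 * n - hammWeight ab.1 ab.2)) := by
        refine Finset.sum_le_sum_of_subset_of_nonneg (Finset.filter_subset _ _) fun ab _ _ => ?_
        have : 0 ≤ 1 - x := by linarith
        positivity
    _ = C := by rw [← Finset.mul_sum, sum_pair_weights, mul_one]
    _ = _ := by
        rw [hC, pow_mul, ← hq, Nat.sub_sub]
        ring
end

section
/- Let n ≥ 1, d ≥ 1 be integers, p ∈ [0,1], and let k be a natural number with k + 1 ≤ 2n and k + 1 ≥ n·(1−p)^d. Then Σ over integers r with (k+1)/2 ≤ r ≤ n of C(n,r) · (2 − (1−p)^d)^{n−r} · (1−p)^{d·r} ≤ (2 − (1−p)^d)^{n−(k+1)/2} · exp( n·H((k+1)/(2n)) ) · (1−p)^{d(k+1)/2}, where C(n,r) is the binomial coefficient and H(x) = −x·ln x − (1−x)·ln(1−x) is the binary entropy (with H(1) interpreted as 0). -/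
/-!
A Chernoff bound for a binomial tail. Put `q = (1 - p) ^ d`, `a = 2 - q`, `m = (k + 1) / 2` and
`x = m / n`. The hypothesis `n * q ≤ k + 1` says `q ≤ 2 * x`, equivalently `q / a ≤ x / (1 - x)`.
Hence, for `r ≥ m`, `a ^ (n - r) * q ^ r = a ^ (n - m) * q ^ m * (q / a) ^ (r - m)` grows at most
by the factor `(x / (1 - x)) ^ (r - m)` relative to `a ^ (n - m) * q ^ m`. Since
`exp (n * H x) = x ^ (-m) * (1 - x) ^ (-(n - m))`, the `r`-th summand is at most the right-hand side
times the binomial weight `C(n, r) * x ^ r * (1 - x) ^ (n - r)`, and these weights sum to `1`.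
The degenerate cases `q = 0` and `x = 1` are treated directly.
-/

open scoped BigOperators

/-- Recentring the exponents of a binomial monomial at a real number `m`: the deviation `r - m` is
carried by the ratio `u / v`. -/
lemma pow_mul_pow_eq_recentred {u v : ℝ} (hu : 0 < u) (hv : 0 < v) {n r : ℕ} (hr : r ≤ n) (m : ℝ) :
    v ^ (n - r) * u ^ r = v ^ ((n : ℝ) - m) * u ^ m * (u / v) ^ ((r : ℝ) - m) := by
  rw [← Real.rpow_natCast v, ← Real.rpow_natCast u, Nat.cast_sub hr,
    Real.div_rpow hu.le hv.le, div_eq_mul_inv, ← Real.rpow_neg hv.le]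
  have h1 : v ^ ((n : ℝ) - r) = v ^ ((n : ℝ) - m) * v ^ (-((r : ℝ) - m)) := by
    rw [← Real.rpow_add hv]; congr 1; ring
  have h2 : u ^ (r : ℝ) = u ^ m * u ^ ((r : ℝ) - m) := by
    rw [← Real.rpow_add hu]; congr 1; ring
  rw [h1, h2]; ring

lemma exp_mul_binEnt {x N m : ℝ} (hx0 : 0 < x) (hx1 : x < 1) (hm : m = N * x) :
    (1 - x) ^ (N - m) * x ^ m * Real.exp (N * binEnt x) = 1 := by
  rw [Real.rpow_def_of_pos (sub_pos.2 hx1), Real.rpow_def_of_pos hx0, ← Real.exp_add,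
    ← Real.exp_add, Real.exp_eq_one_iff, hm, binEnt]
  ring

/-- The tail bound in terms of a general `q`, away from the degenerate cases. -/
lemma tail_bound_of_pos {n k : ℕ} {q x m : ℝ} (hq0 : 0 < q) (hx0 : 0 < x) (hx1 : x < 1)
    (hqx : q ≤ 2 * x) (hm : m = n * x) (hmk : m = ((k : ℝ) + 1) / 2) :
    ∑ r ∈ (Finset.range (n + 1)).filter (fun r => k + 1 ≤ 2 * r),
      (n.choose r : ℝ) * (2 - q) ^ (n - r) * q ^ r
      ≤ (2 - q) ^ ((n : ℝ) - m) * Real.exp ((n : ℝ) * binEnt x) * q ^ m := by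
  have ha : 0 < 2 - q := by linarith
  have hy : 0 < 1 - x := by linarith
  have hratio : q / (2 - q) ≤ x / (1 - x) := by
    rw [div_le_div_iff₀ ha hy]; nlinarith
  have hexp := exp_mul_binEnt hx0 hx1 hm
  set E := Real.exp ((n : ℝ) * binEnt x)
  have hE : 0 < E := Real.exp_pos _
  set R := (2 - q) ^ ((n : ℝ) - m) * E * q ^ m with hR
  have hR0 : 0 ≤ R := by positivity
  have hterm : ∀ r ∈ (Finset.range (n + 1)).filter (fun r => k + 1 ≤ 2 * r),
      (n.choose r : ℝ) * (2 - q) ^ (n - r) * q ^ r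
        ≤ R * (x ^ r * (1 - x) ^ (n - r) * (n.choose r : ℝ)) := by
    intro r hr
    rw [Finset.mem_filter, Finset.mem_range] at hr
    have hrn : r ≤ n := by omega
    have hrm : 0 ≤ (r : ℝ) - m := by
      have : (k : ℝ) + 1 ≤ 2 * r := by exact_mod_cast hr.2
      linarith
    have hpow : (q / (2 - q)) ^ ((r : ℝ) - m) ≤ (x / (1 - x)) ^ ((r : ℝ) - m) :=
      Real.rpow_le_rpow (by positivity) hratio hrm
    calc (n.choose r : ℝ) * (2 - q) ^ (n - r) * q ^ r
        = n.choose r * ((2 - q) ^ ((n : ℝ) - m) * q ^ m * (q / (2 - q)) ^ ((r : ℝ) - m)) := by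
          rw [mul_assoc, pow_mul_pow_eq_recentred hq0 ha hrn m]
      _ ≤ n.choose r * ((2 - q) ^ ((n : ℝ) - m) * q ^ m * (x / (1 - x)) ^ ((r : ℝ) - m)) := by
          gcongr
      _ = n.choose r * ((2 - q) ^ ((n : ℝ) - m) * q ^ m * (x / (1 - x)) ^ ((r : ℝ) - m)) *
            ((1 - x) ^ ((n : ℝ) - m) * x ^ m * E) := by rw [hexp, mul_one]
      _ = R * (((1 - x) ^ ((n : ℝ) - m) * x ^ m * (x / (1 - x)) ^ ((r : ℝ) - m)) *
            n.choose r) := by rw [hR]; ring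
      _ = R * (x ^ r * (1 - x) ^ (n - r) * (n.choose r : ℝ)) := by
          rw [← pow_mul_pow_eq_recentred hx0 hy hrn m]; ring
  calc _ ≤ _ := Finset.sum_le_sum hterm
    _ ≤ ∑ r ∈ Finset.range (n + 1), R * (x ^ r * (1 - x) ^ (n - r) * (n.choose r : ℝ)) :=
        Finset.sum_le_sum_of_subset_of_nonneg (Finset.filter_subset _ _)
          fun r _ _ => by positivity
    _ = R := by rw [← Finset.mul_sum, ← add_pow]; simp

/-- Bound on the tail probability mass of the diagonal of the
amplitude-damped `|+⟩⟨+|^{⊗n}` state, over Hamming weights `r` with `(k+1)/2 ≤ r ≤ n`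
(for natural `r`, `(k+1)/2 ≤ r` is precisely `k + 1 ≤ 2r`). -/
theorem diagonal_tail_bound
    (n d : ℕ) (hn : 1 ≤ n) (hd : 1 ≤ d) (p : ℝ) (hp0 : 0 ≤ p) (hp1 : p ≤ 1)
    (k : ℕ) (hk : k + 1 ≤ 2 * n) (hk2 : (n : ℝ) * (1 - p) ^ d ≤ (k : ℝ) + 1) :
    ∑ r ∈ (Finset.range (n + 1)).filter (fun r => k + 1 ≤ 2 * r),
      (n.choose r : ℝ) * (2 - (1 - p) ^ d) ^ (n - r) * (1 - p) ^ (d * r)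
      ≤ (2 - (1 - p) ^ d) ^ ((n : ℝ) - ((k : ℝ) + 1) / 2) *
          Real.exp ((n : ℝ) * binEnt (((k : ℝ) + 1) / (2 * (n : ℝ)))) *
          (1 - p) ^ ((d : ℝ) * ((k : ℝ) + 1) / 2) := by
  have hb : (0 : ℝ) ≤ 1 - p := by linarith
  have hn0 : (0 : ℝ) < n := by exact_mod_cast hn
  have hkR : (k : ℝ) + 1 ≤ 2 * n := by exact_mod_cast hk
  have hk0 : (0 : ℝ) < (k : ℝ) + 1 := by positivity
  have hrpow : (1 - p) ^ ((d : ℝ) * ((k : ℝ) + 1) / 2) = ((1 - p) ^ d) ^ (((k : ℝ) + 1) / 2) := by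
    rw [mul_div_assoc, Real.rpow_mul hb, Real.rpow_natCast]
  simp only [hrpow, pow_mul]
  have hq0 : 0 ≤ (1 - p) ^ d := pow_nonneg hb d
  have hq1 : (1 - p) ^ d ≤ 1 := pow_le_one₀ hb (by linarith)
  generalize (1 - p) ^ d = q at *
  have ha : 0 < 2 - q := by linarith
  rcases hq0.eq_or_lt with rfl | hq
  · -- Every `r` in the range is positive, so all summands vanish.
    rw [Finset.sum_eq_zero]
    · positivity
    · intro r hr
      have hr0 : r ≠ 0 := by
        have := (Finset.mem_filter.1 hr).2
        omega
      simp [hr0]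
  rcases hk.eq_or_lt with hkn | hkn
  · -- Here `x = 1` and the sum consists of the single term `r = n`.
    have hkn' : (k : ℝ) + 1 = 2 * n := by exact_mod_cast hkn
    have hfilter : (Finset.range (n + 1)).filter (fun r => k + 1 ≤ 2 * r) = {n} := by
      ext r
      simp only [Finset.mem_filter, Finset.mem_range, Finset.mem_singleton]
      omega
    have hhalf : (2 * (n : ℝ)) / 2 = n := by ring
    have hone : (2 * (n : ℝ)) / (2 * n) = 1 := div_self (by positivity)
    rw [hfilter, hkn', hhalf, hone]
    simp [binEnt]
  · have hkn' : (k : ℝ) + 1 < 2 * n := by exact_mod_cast hkn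
    have hkn2 : (0 : ℝ) < 2 * n := by linarith
    refine tail_bound_of_pos hq (div_pos hk0 hkn2) ?_ ?_ ?_ rfl
    · rw [div_lt_one (by positivity)]; exact hkn'
    · rw [← mul_div_assoc, mul_div_mul_left _ _ two_ne_zero, le_div_iff₀ hn0]; linarith
    · field_simp
end

section
/- Let n ≥ 1, let h be an even natural number with h ≤ 2n, and let r be a natural number with r ≤ h/2 and h/2 + r ≤ n. Then the number of pairs of bitstrings (a,b), a, b : Fin n → Bool, satisfying |a| + |b| = h and #{ j : a(j) = false and b(j) = false } = n − h/2 − r, equals C(n, h/2 + r) · C(h/2 + r, 2r) · 4^{r}, where C(·,·) denotes binomial coefficients. -/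
/-!
With `m = h / 2`, write `U` for the positions where `a` or `b` is true, `D ⊆ U` for those where
`a` and `b` differ and `E ⊆ D` for those where only `a` is true. The pair `(a, b)` is recovered
from the flag `E ⊆ D ⊆ U`, and every flag arises. Since `|a| + |b| + |D| = 2 |U|` and the number
of common zeros is `n - |U|`, the two conditions on `(a, b)` say exactly that `|U| = m + r` and
`|D| = 2 r`. Counting flags gives `C(n, m + r) * C(m + r, 2 r) * 2 ^ (2 r)`.
-/

open scoped BigOperators

/-- A position where both strings are true counts twice on each side; a position where exactly
one is true counts once in the weights and once as a disagreement. -/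
lemma bitWeight_add_disagreements {n : ℕ} (a b : Fin n → Bool) :
    bitWeight a + bitWeight b + (Finset.univ.filter fun j => a j ≠ b j).card
      = 2 * (Finset.univ.filter fun j => a j = true ∨ b j = true).card := by
  simp only [bitWeight, Finset.card_filter, ← Finset.sum_add_distrib, Finset.mul_sum]
  refine Finset.sum_congr rfl fun j _ => ?_
  cases a j <;> cases b j <;> simp

lemma commonZeros_add_support {n : ℕ} (a b : Fin n → Bool) :
    (Finset.univ.filter fun j => a j = false ∧ b j = false).card
      + (Finset.univ.filter fun j => a j = true ∨ b j = true).card = n := by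
  have key : (Finset.univ.filter fun j => a j = false ∧ b j = false).card
      + (Finset.univ.filter fun j => a j = true ∨ b j = true).card = ∑ _j : Fin n, 1 := by
    simp only [Finset.card_filter, ← Finset.sum_add_distrib]
    refine Finset.sum_congr rfl fun j _ => ?_
    cases a j <;> cases b j <;> simp
  simpa using key

/-- The flags `E ⊆ D ⊆ U` in `Fin n` with `|U| = k` and `|D| = t`, stored as `⟨U, D, E⟩`. -/
def supportFlags (n k t : ℕ) :
    Finset (Σ _ : Finset (Fin n), Σ _ : Finset (Fin n), Finset (Fin n)) :=
  (Finset.powersetCard k Finset.univ).sigma fun U =>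
    (Finset.powersetCard t U).sigma fun D => D.powerset

lemma card_supportFlags (n k t : ℕ) :
    (supportFlags n k t).card = n.choose k * k.choose t * 2 ^ t := by
  have inner : ∀ U ∈ Finset.powersetCard k (Finset.univ : Finset (Fin n)),
      ((Finset.powersetCard t U).sigma fun D => D.powerset).card = k.choose t * 2 ^ t := by
    intro U hU
    rw [Finset.card_sigma, Finset.sum_congr rfl (g := fun _ => 2 ^ t)]
    · simp [(Finset.mem_powersetCard.1 hU).2]
    · intro D hD
      rw [Finset.card_powerset, (Finset.mem_powersetCard.1 hD).2]
  rw [supportFlags, Finset.card_sigma, Finset.sum_congr rfl inner]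
  simp [mul_assoc]

/-- Pairs of bitstrings with joint support of size `k` and `t` disagreements correspond to flags:
`U` is the joint support, `D` the set of disagreements and `E` the set where only `a` is true. -/
lemma card_pairs_eq_card_supportFlags (n k t : ℕ) :
    (Finset.univ.filter (fun ab : (Fin n → Bool) × (Fin n → Bool) =>
        (Finset.univ.filter fun j => ab.1 j = true ∨ ab.2 j = true).card = k ∧
        (Finset.univ.filter fun j => ab.1 j ≠ ab.2 j).card = t)).card
      = (supportFlags n k t).card := by
  refine Finset.card_bij'
    (fun ab _ => ⟨Finset.univ.filter fun j => ab.1 j = true ∨ ab.2 j = true,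
      Finset.univ.filter fun j => ab.1 j ≠ ab.2 j,
      Finset.univ.filter fun j => ab.1 j = true ∧ ab.2 j = false⟩)
    (fun F _ => (fun j => decide (j ∈ F.1 ∧ (j ∈ F.2.1 → j ∈ F.2.2)),
      fun j => decide (j ∈ F.1 ∧ j ∉ F.2.2))) ?_ ?_ ?_ ?_
  · rintro ⟨a, b⟩ hab
    simp only [Finset.mem_filter, Finset.mem_univ, true_and] at hab
    simp only [supportFlags, Finset.mem_sigma, Finset.mem_powersetCard, Finset.mem_powerset]
    refine ⟨⟨Finset.subset_univ _, hab.1⟩, ⟨?_, hab.2⟩, ?_⟩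
    · intro j
      cases ha : a j <;> cases hb : b j <;> simp [ha, hb]
    · intro j
      cases ha : a j <;> cases hb : b j <;> simp [ha, hb]
  · rintro ⟨U, D, E⟩ hF
    simp only [supportFlags, Finset.mem_sigma, Finset.mem_powersetCard, Finset.mem_powerset] at hF
    obtain ⟨⟨-, hU⟩, ⟨hDU, hD⟩, hED⟩ := hF
    simp only [Finset.mem_filter, Finset.mem_univ, true_and]
    constructor
    · rw [← hU]
      congr 1
      ext j
      have h1 := @hDU j
      have h2 := @hED j
      by_cases hjU : j ∈ U <;> by_cases hjD : j ∈ D <;> by_cases hjE : j ∈ E <;> simp_all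
    · rw [← hD]
      congr 1
      ext j
      have h1 := @hDU j
      have h2 := @hED j
      by_cases hjU : j ∈ U <;> by_cases hjD : j ∈ D <;> by_cases hjE : j ∈ E <;> simp_all
  · rintro ⟨a, b⟩ -
    ext j
    · cases ha : a j <;> cases hb : b j <;> simp [ha, hb]
    · cases ha : a j <;> cases hb : b j <;> simp [ha, hb]
  · rintro ⟨U, D, E⟩ hF
    simp only [supportFlags, Finset.mem_sigma, Finset.mem_powersetCard, Finset.mem_powerset] at hF
    obtain ⟨-, ⟨hDU, -⟩, hED⟩ := hF
    simp only [Sigma.mk.injEq, heq_eq_eq]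
    refine ⟨?_, ?_, ?_⟩ <;>
    · ext j
      have h1 := @hDU j
      have h2 := @hED j
      by_cases hjU : j ∈ U <;> by_cases hjD : j ∈ D <;> by_cases hjE : j ∈ E <;> simp_all

/-- Among weight-`h` operators `|a⟩⟨b|` on `n` qubits (with `h` even),
the number of pairs with exactly `n − h/2 − r` common-zero positions equals
`C(n, h/2 + r) · C(h/2 + r, 2r) · 4^r`. -/
theorem count_pairs_with_given_common_zeros
    (n : ℕ) (hn : 1 ≤ n) (h r : ℕ) (hheven : Even h) (hh : h ≤ 2 * n)
    (hr : r ≤ h / 2) (hrn : h / 2 + r ≤ n) :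
    (Finset.univ.filter (fun ab : (Fin n → Bool) × (Fin n → Bool) =>
        bitWeight ab.1 + bitWeight ab.2 = h ∧
        (Finset.univ.filter fun j => ab.1 j = false ∧ ab.2 j = false).card
          = n - h / 2 - r)).card
      = n.choose (h / 2 + r) * (h / 2 + r).choose (2 * r) * 4 ^ r := by
  have h4 : (4 : ℕ) ^ r = 2 ^ (2 * r) := by rw [pow_mul]; norm_num
  rw [h4, ← card_supportFlags, ← card_pairs_eq_card_supportFlags]
  congr 1
  ext ⟨a, b⟩
  simp only [Finset.mem_filter, Finset.mem_univ, true_and]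
  have hw := bitWeight_add_disagreements a b
  have hz := commonZeros_add_support a b
  obtain ⟨m, rfl⟩ := hheven
  omega
end

section
/- Let ℓ = q + m with q ≥ 1 and m ≥ 0, let φ ∈ ℝ, and let C^{(ℓ)}(φ) be the 2^ℓ × 2^ℓ diagonal matrix that acts as the identity on all computational basis vectors of (ℂ²)^{⊗ℓ} except |1⟩^{⊗ℓ}, which it multiplies by e^{iφ} (the ℓ-local controlled-phase gate). Let σ₊ = |1⟩⟨0| and I(a) = |0⟩⟨0| + a|1⟩⟨1| for a ∈ ℂ, and let a : Fin m → ℂ. Then C^{(ℓ)}(φ) · ( σ₊^{⊗q} ⊗ I(a₁) ⊗ ⋯ ⊗ I(a_m) ) · C^{(ℓ)}(φ)† = σ₊^{⊗q} ⊗ I(a₁) ⊗ ⋯ ⊗ I(a_m) + (e^{iφ} − 1) · (Π_{j=1}^{m} a_j) · σ₊^{⊗q} ⊗ (|1⟩⟨1|)^{⊗m}. -/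
/-!
The gate is diagonal, so conjugation multiplies the entry `F x y` by `d x * conj (d y)`, where `d`
is `e^{iφ}` at the all-ones index and `1` elsewhere. A nonzero entry of `σ₊^{⊗q}` forces the first
`q` bits of `x` to be `1` and those of `y` to be `0`; since `q ≥ 1`, `y` is not the all-ones index
and `d y = 1`. The factor `d x` differs from `1` only if the last `m` bits of `x` are also `1`, and
on such rows `I(a) = a |1⟩⟨1|`; on all other rows `|1⟩⟨1|^{⊗m}` vanishes.
-/

open scoped BigOperators
open Matrix

/-- The diagonal frame element `I(a) = |0⟩⟨0| + a|1⟩⟨1|`. -/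
def Iop (a : ℂ) : Matrix (Fin 2) (Fin 2) ℂ := !![1, 0; 0, a]

/-- The raising operator `σ₊ = |1⟩⟨0|`. -/
def sigmaPlus : Matrix (Fin 2) (Fin 2) ℂ := !![0, 0; 1, 0]

/-- The projector `|1⟩⟨1|`. -/
def proj1 : Matrix (Fin 2) (Fin 2) ℂ := !![0, 0; 0, 1]

lemma sigmaPlus_ne_zero {u v : Fin 2} (h : sigmaPlus u v ≠ 0) : u = 1 ∧ v = 0 := by
  fin_cases u <;> fin_cases v <;> simp_all [sigmaPlus]

lemma Iop_one_row (a : ℂ) (v : Fin 2) : Iop a 1 v = a * proj1 1 v := by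
  fin_cases v <;> simp [Iop, proj1]

lemma proj1_row_of_ne_one {u : Fin 2} (h : u ≠ 1) (v : Fin 2) : proj1 u v = 0 := by
  fin_cases u <;> fin_cases v <;> simp_all [proj1]

/-- Action of the `ℓ`-local controlled-phase gate (`ℓ = q + m`) on the
frame string `σ₊^{⊗q} ⊗ I(a₁) ⊗ ⋯ ⊗ I(a_m)`, with the `ℓ`-qubit space realized as
`(ℂ²)^{⊗q} ⊗ (ℂ²)^{⊗m}` indexed by `(Fin q → Fin 2) × (Fin m → Fin 2)`:
`C^{(ℓ)}(φ)·(σ₊^{⊗q} ⊗ I(a₁)⊗⋯⊗I(a_m))·C^{(ℓ)}(φ)†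
  = σ₊^{⊗q} ⊗ I(a₁)⊗⋯⊗I(a_m) + (e^{iφ} − 1)·(Π_j a_j)·σ₊^{⊗q} ⊗ |1⟩⟨1|^{⊗m}`. -/
theorem multi_controlled_phase_frame_action
    (q m : ℕ) (hq : 1 ≤ q) (φ : ℝ) (a : Fin m → ℂ)
    (C F G : Matrix ((Fin q → Fin 2) × (Fin m → Fin 2)) ((Fin q → Fin 2) × (Fin m → Fin 2)) ℂ)
    (hC : ∀ x y, C x y =
      if x = y then
        (if (∀ i, x.1 i = 1) ∧ (∀ j, x.2 j = 1) then Complex.exp (φ * Complex.I) else 1)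
      else 0)
    (hF : ∀ x y, F x y =
      (∏ i, sigmaPlus (x.1 i) (y.1 i)) * ∏ j, Iop (a j) (x.2 j) (y.2 j))
    (hG : ∀ x y, G x y =
      (∏ i, sigmaPlus (x.1 i) (y.1 i)) * ∏ j, proj1 (x.2 j) (y.2 j)) :
    C * F * Cᴴ = F + ((Complex.exp (φ * Complex.I) - 1) * ∏ j, a j) • G := by
  have hD : C = Matrix.diagonal (fun x => if (∀ i, x.1 i = 1) ∧ (∀ j, x.2 j = 1) then
      Complex.exp (φ * Complex.I) else 1) := by
    ext x y
    rw [hC, Matrix.diagonal_apply]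
  ext x y
  rw [hD, Matrix.diagonal_conjTranspose, Matrix.mul_diagonal, Matrix.diagonal_mul,
    Matrix.add_apply, Matrix.smul_apply, hF, hG, smul_eq_mul, Pi.star_apply]
  by_cases hs : ∏ i, sigmaPlus (x.1 i) (y.1 i) = 0
  · simp [hs]
  have hbits : ∀ i, x.1 i = 1 ∧ y.1 i = 0 := fun i =>
    sigmaPlus_ne_zero (Finset.prod_ne_zero_iff.mp hs i (Finset.mem_univ i))
  -- `q ≥ 1` supplies a bit at which `y` is `0`, so the gate acts trivially on the right.
  have hy : ¬((∀ i, y.1 i = 1) ∧ (∀ j, y.2 j = 1)) := by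
    rintro ⟨h, -⟩
    have h1 := h ⟨0, hq⟩
    rw [(hbits ⟨0, hq⟩).2] at h1
    exact zero_ne_one h1
  rw [if_neg hy, star_one, mul_one]
  by_cases hx : ∀ j, x.2 j = 1
  · have hI : ∏ j, Iop (a j) (x.2 j) (y.2 j) = (∏ j, a j) * ∏ j, proj1 (x.2 j) (y.2 j) := by
      rw [← Finset.prod_mul_distrib]
      exact Finset.prod_congr rfl fun j _ => by rw [hx j, Iop_one_row]
    rw [if_pos ⟨fun i => (hbits i).1, hx⟩, hI]
    ring
  · rw [if_neg fun h => hx h.2]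
    push Not at hx
    obtain ⟨j, hj⟩ := hx
    rw [Finset.prod_eq_zero (f := fun j => proj1 (x.2 j) (y.2 j)) (Finset.mem_univ j)
      (proj1_row_of_ne_one hj _)]
    ring
end

section
/- Let n ≥ 2 be an integer, δ ∈ (0, 1/2), and let λ be a real number with λ > 4 + 2·ln(4)/ln(n). Let k be a natural number with k + 1 ≤ n and k + 1 ≥ ln(2/δ) / ( (λ/2 − 2)·ln(n) − ln(4) ). Then 2 · exp( 2n·H((k+1)/(2n)) ) · n^{−λ(k+1)/2} ≤ δ, where H(x) = −x·ln x − (1−x)·ln(1−x) is the binary entropy. -/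
lemma binEnt_le {x : ℝ} (hx : x < 1) : binEnt x ≤ x * (1 - Real.log x) := by
  have hpos : 0 < 1 - x := by linarith
  have h := mul_le_mul_of_nonneg_left (Real.one_sub_inv_le_log_of_pos hpos) hpos.le
  rw [mul_sub, mul_inv_cancel₀ hpos.ne'] at h
  unfold binEnt
  linarith

lemma one_le_log_four : 1 ≤ Real.log 4 := by
  have h : Real.log 4 = 2 * Real.log 2 := by
    rw [show (4 : ℝ) = 2 ^ 2 by norm_num, Real.log_pow]; norm_num
  linarith [Real.log_two_gt_d9]

/-- The entropy term costs at most a factor `(4 n²)^m`. -/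
lemma entropy_exponent_le {n m : ℝ} (hn : 2 ≤ n) (hm : 1 ≤ m) (hmn : m ≤ n) :
    2 * n * binEnt (m / (2 * n)) ≤ m * (2 * Real.log n + Real.log 4) := by
  have hn0 : 0 < 2 * n := by linarith
  have hx : m / (2 * n) < 1 := by rw [div_lt_one hn0]; linarith
  have h := mul_le_mul_of_nonneg_left (binEnt_le hx) hn0.le
  have hlog : Real.log (m / (2 * n)) = Real.log m - Real.log (2 * n) :=
    Real.log_div (by linarith) hn0.ne'
  have h4 : 2 * Real.log (2 * n) = 2 * Real.log n + Real.log 4 := by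
    rw [Real.log_mul (by norm_num) (by linarith), show (4 : ℝ) = 2 ^ 2 by norm_num,
      Real.log_pow]
    push_cast; ring
  have hge : 1 ≤ Real.log (2 * n) :=
    one_le_log_four.trans (Real.log_le_log (by norm_num) (by linarith))
  have hm0 := Real.log_nonneg hm
  rw [← mul_assoc, mul_div_cancel₀ _ hn0.ne', hlog] at h
  rw [← h4]
  refine h.trans (mul_le_mul_of_nonneg_left ?_ (by linarith))
  linarith

/-- Quantitative choice of the Hamming-weight cutoff `k`: for `n ≥ 2`,
`δ ∈ (0, 1/2)`, depth parameter `λ > 4 + 2·ln 4/ln n`, and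
`k + 1 ≥ ln(2/δ) / ((λ/2 − 2)·ln n − ln 4)` with `k + 1 ≤ n`, one has
`2·exp(2n·H((k+1)/(2n)))·n^{−λ(k+1)/2} ≤ δ`. -/
theorem cutoff_choice_bound
    (n : ℕ) (hn : 2 ≤ n) (δ : ℝ) (hδ0 : 0 < δ) (hδ1 : δ < 1 / 2)
    (lam : ℝ) (hlam : 4 + 2 * Real.log 4 / Real.log n < lam)
    (k : ℕ) (hk : k + 1 ≤ n)
    (hk2 : Real.log (2 / δ) / ((lam / 2 - 2) * Real.log n - Real.log 4) ≤ (k : ℝ) + 1) :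
    2 * Real.exp (2 * (n : ℝ) * binEnt (((k : ℝ) + 1) / (2 * (n : ℝ)))) *
        (n : ℝ) ^ (-(lam * ((k : ℝ) + 1)) / 2) ≤ δ := by
  have hn' : (2 : ℝ) ≤ n := by exact_mod_cast hn
  have hk' : (k : ℝ) + 1 ≤ n := by exact_mod_cast hk
  have hL : 0 < Real.log n := Real.log_pos (by linarith)
  have hE := entropy_exponent_le hn' (by linarith [k.cast_nonneg (α := ℝ)]) hk'
  -- The hypothesis on `lam` says exactly that the denominator in `hk2` is positive.
  have hD : 0 < (lam / 2 - 2) * Real.log n - Real.log 4 := by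
    have h : 2 * Real.log 4 / Real.log n < lam - 4 := by linarith
    rw [div_lt_iff₀ hL] at h
    linarith
  rw [div_le_iff₀ hD, Real.log_div two_ne_zero hδ0.ne'] at hk2
  rw [Real.rpow_def_of_pos (by linarith : (0 : ℝ) < n), mul_assoc, ← Real.exp_add]
  have hexp : 2 * (n : ℝ) * binEnt (((k : ℝ) + 1) / (2 * (n : ℝ))) +
      Real.log n * (-(lam * ((k : ℝ) + 1)) / 2) ≤ Real.log (δ / 2) := by
    rw [Real.log_div hδ0.ne' two_ne_zero]
    linarith
  have hfin := Real.exp_le_exp.2 hexp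
  rw [Real.exp_log (by positivity)] at hfin
  linarith
end
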